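/- For every r > (d+1)/d there exists a constant C_r < ∞ such that for every nonnegative measurable function f ∈ L^{(d+1)/d}(ℝ^d), ( ∫_0^∞ ( λ · |{x ∈ ℝ^d : Tf(x) > λ}|^{1/(d+1)} )^r dλ/λ )^{1/r} ≤ C_r ‖f‖_{L^{(d+1)/d}}; that is, T maps L^{(d+1)/d}(ℝ^d) boundedly into the Lorentz space L^{d+1, r}(ℝ^d). -/

import Mathlib

open MeasureTheory ENNReal

noncomputable section

/-- `ℝ^{d-1}` -/
abbrev Vec (n : ℕ) : Type := EuclideanSpace ℝ (Fin n)

/-- `ℝ^d = ℝ^{d-1} × ℝ`, a point `x = (x', x_d)` -/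
abbrev Pt (n : ℕ) : Type := Vec n × ℝ

/-- The Radon-like transform `Tf(x) = ∫_{ℝ^{d-1}} f(x' - t, x_d - |t|²) dt`. -/
def radonT (n : ℕ) (f : Pt n → ℝ≥0∞) (x : Pt n) : ℝ≥0∞ :=
  ∫⁻ t : Vec n, f (x.1 - t, x.2 - ‖t‖ ^ 2)

/-- The `L^p` norm `(∫ f^p)^{1/p}` of a nonnegative function. -/
def LpN (n : ℕ) (p : ℝ) (f : Pt n → ℝ≥0∞) : ℝ≥0∞ :=
  (∫⁻ x, f x ^ p) ^ (1 / p)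

/-- The graph-parametrized Radon transform. -/
def Rd (n : ℕ) (f : (Fin n → ℝ) × ℝ → ℝ≥0∞) (x : (Fin n → ℝ) × ℝ) : ℝ≥0∞ :=
  ∫⁻ y : Fin n → ℝ, f (y, x.2 + x.1 ⬝ᵥ y)

/-- The strong type bound. -/
def PP (n : ℕ) : Prop := ∃ C : ℝ≥0∞, C ≠ ⊤ ∧ ∀ f : (Fin n → ℝ) × ℝ → ℝ≥0∞, Measurable f →
  ∫⁻ x, (Rd n f x) ^ (n + 2) ≤ C * (∫⁻ x, f x ^ (((n : ℝ) + 2) / (n + 1))) ^ (n + 1)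

lemma meas_dot (n : ℕ) : Measurable (fun x : (Fin n → ℝ) × (Fin n → ℝ) => x.1 ⬝ᵥ x.2) :=
  (Continuous.dotProduct continuous_fst continuous_snd).measurable

lemma meas_dot' {n : ℕ} {α : Type*} [MeasurableSpace α] {f g : α → (Fin n → ℝ)}
    (hf : Measurable f) (hg : Measurable g) : Measurable (fun x => f x ⬝ᵥ g x) :=
  (meas_dot n).comp (hf.prodMk hg)

lemma meas_Rd {n : ℕ} {f : (Fin n → ℝ) × ℝ → ℝ≥0∞} (hf : Measurable f) : Measurable (Rd n f) := by
  unfold Rd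
  refine Measurable.lintegral_prod_right' (f := fun p : ((Fin n → ℝ) × ℝ) × (Fin n → ℝ) =>
    f (p.2, p.1.2 + p.1.1 ⬝ᵥ p.2)) ?_
  refine hf.comp (measurable_snd.prodMk (Measurable.add (by fun_prop) ?_))
  exact meas_dot' (by fun_prop) (by fun_prop)

lemma meas_Rd' {n : ℕ} {α : Type*} [MeasurableSpace α] {f : (Fin n → ℝ) × ℝ → ℝ≥0∞}
    (hf : Measurable f) {u : α → (Fin n → ℝ)} {v : α → ℝ} (hu : Measurable u) (hv : Measurable v) :
    Measurable (fun x => Rd n f (u x, v x)) :=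
  (meas_Rd hf).comp (hu.prodMk hv)

lemma PP_zero : PP 0 := by
  refine ⟨1, by simp, fun f hf => ?_⟩
  have h : ∀ x, Rd 0 f x = f x := by
    intro x
    unfold Rd
    rw [Measure.volume_pi_eq_dirac 0, lintegral_dirac]
    congr 1
    ext i
    · exact i.elim0
    · simp
  simp only [h]
  norm_num

lemma split_lintegral {k : ℕ} (F : (Fin (k+1) → ℝ) → ℝ≥0∞) (hF : Measurable F) :
    ∫⁻ y, F y = ∫⁻ ρ : ℝ, ∫⁻ y' : Fin k → ℝ, F (Fin.cons ρ y') := by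
  have h := (volume_preserving_piFinSuccAbove (fun _ : Fin (k+1) => ℝ) 0).symm
  rw [← h.lintegral_comp hF]
  rw [Measure.volume_eq_prod, lintegral_prod]
  · refine lintegral_congr fun ρ => lintegral_congr fun y => ?_
    congr 1
    ext i
    simp [MeasurableEquiv.piFinSuccAbove, Fin.insertNthEquiv]
  · exact (hF.comp h.measurable).aemeasurable

lemma meas_cons {k : ℕ} {α : Type*} [MeasurableSpace α] {u : α → ℝ} {v : α → (Fin k → ℝ)}
    (hu : Measurable u) (hv : Measurable v) :
    Measurable (fun x => (Fin.cons (u x) (v x) : Fin (k+1) → ℝ)) := by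
  rw [measurable_pi_iff]
  intro i
  refine Fin.cases ?_ (fun j => ?_) i
  · simpa using hu
  · simp only [Fin.cons_succ]
    exact (measurable_pi_apply j).comp hv

lemma scale_lintegral {E : Type*} [NormedAddCommGroup E] [NormedSpace ℝ E] [MeasurableSpace E]
    [BorelSpace E] [FiniteDimensional ℝ E] (μ : Measure E) [μ.IsAddHaarMeasure]
    (F : E → ℝ≥0∞) {ρ : ℝ} (hρ : ρ ≠ 0) :
    ∫⁻ y, F y ∂μ = ENNReal.ofReal |ρ| ^ (Module.finrank ℝ E) * ∫⁻ w, F (ρ • w) ∂μ := by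
  have e := (Homeomorph.smulOfNeZero ρ hρ : E ≃ₜ E).toMeasurableEquiv
  have h1 : ∫⁻ w, F (ρ • w) ∂μ = ∫⁻ y, F y ∂(Measure.map (fun x => ρ • x) μ) := by
    have := lintegral_map_equiv (μ := μ) F (Homeomorph.smulOfNeZero ρ hρ : E ≃ₜ E).toMeasurableEquiv
    exact this.symm
  rw [h1, Measure.map_addHaar_smul μ hρ, lintegral_smul_measure, smul_eq_mul, ← mul_assoc,
    ← ENNReal.ofReal_pow (abs_nonneg _), ← ENNReal.ofReal_mul (by positivity)]
  have : |ρ| ^ Module.finrank ℝ E * |(ρ ^ Module.finrank ℝ E)⁻¹| = 1 := by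
    rw [abs_inv, abs_pow]
    exact mul_inv_cancel₀ (by positivity)
  rw [this]; simp

/-- One-dimensional inequality. -/
lemma one_dim (k : ℕ) (A : ℝ → ℝ≥0∞) (hA1 : ∀ x, A x ≤ 1) (hA : Measurable A) :
    (∫⁻ ρ, ENNReal.ofReal |ρ| ^ k * A ρ) ^ (((k:ℝ) + 2) / (k + 1)) ≤
      3 ^ (((k:ℝ) + 2) / (k + 1)) * ∫⁻ ρ, ENNReal.ofReal |ρ| ^ (k + 1) * A ρ := by
  set X := ∫⁻ ρ, ENNReal.ofReal |ρ| ^ k * A ρ with hX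
  set Y := ∫⁻ ρ, ENNReal.ofReal |ρ| ^ (k + 1) * A ρ with hY
  have hk : (0:ℝ) < ((k:ℝ) + 2) / (k + 1) := by positivity
  have hmA : Measurable (fun ρ : ℝ => ENNReal.ofReal |ρ| ^ (k + 1) * A ρ) := by fun_prop
  rcases eq_or_ne Y ⊤ with hYt | hYt
  · rw [hYt, ENNReal.mul_top]
    · exact le_top
    · simp [ENNReal.rpow_eq_zero_iff, hk.not_gt]
  rcases eq_or_ne Y 0 with hY0 | hY0
  · have : X = 0 := by
      rw [hY, lintegral_eq_zero_iff hmA] at hY0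
      rw [hX, lintegral_eq_zero_iff (by fun_prop)]
      filter_upwards [hY0, compl_mem_ae_iff.2 (measure_singleton (0:ℝ))] with ρ h1 h2
      simp only [Pi.zero_apply, mul_eq_zero, pow_eq_zero_iff', ENNReal.ofReal_eq_zero] at h1 ⊢
      have h3 : 0 < |ρ| := abs_pos.2 (by simpa using h2)
      rcases h1 with h1 | h1
      · exact absurd h1.1 (not_le.2 h3)
      · exact Or.inr h1
    rw [this, ENNReal.zero_rpow_of_pos hk]; simp
  -- main case
  have key : ∀ t : ℝ, 0 < t → X ≤ 2 * ENNReal.ofReal t ^ (k+1) + Y / ENNReal.ofReal t := by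
    intro t ht
    have ht' : ENNReal.ofReal t ≠ 0 := by simpa using ht
    calc X ≤ ∫⁻ ρ, ((Set.Icc (-t) t).indicator (fun _ => ENNReal.ofReal t ^ k) ρ +
          (ENNReal.ofReal t)⁻¹ * (ENNReal.ofReal |ρ| ^ (k + 1) * A ρ)) := by
          refine lintegral_mono fun ρ => ?_
          by_cases h : ρ ∈ Set.Icc (-t) t
          · rw [Set.indicator_of_mem h]
            refine le_trans ?_ le_self_add
            calc _ ≤ ENNReal.ofReal t ^ k * 1 := by
                  gcongr
                  · exact abs_le.2 h
                  · exact hA1 ρ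
              _ = _ := by simp
          · rw [Set.indicator_of_notMem h, zero_add]
            have h2 : t ≤ |ρ| := by
              by_contra h3
              exact h (abs_le.1 (not_le.1 h3).le)
            have h4 : 1 ≤ (ENNReal.ofReal t)⁻¹ * ENNReal.ofReal |ρ| := by
              rw [mul_comm, ← div_eq_mul_inv, ENNReal.le_div_iff_mul_le (Or.inl ht') (Or.inl (by simp))]
              simpa using ENNReal.ofReal_le_ofReal h2
            calc _ = 1 * (ENNReal.ofReal |ρ| ^ k * A ρ) := by simp
              _ ≤ ((ENNReal.ofReal t)⁻¹ * ENNReal.ofReal |ρ|) * (ENNReal.ofReal |ρ| ^ k * A ρ) := by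
                  gcongr
              _ = _ := by ring
      _ = _ := by
          rw [lintegral_add_right _ (by fun_prop), lintegral_indicator_const measurableSet_Icc,
            lintegral_const_mul _ hmA, Real.volume_Icc]
          have : ENNReal.ofReal (t - -t) = 2 * ENNReal.ofReal t := by
            rw [show t - -t = 2 * t by ring, ENNReal.ofReal_mul (by norm_num)]; simp
          rw [this, ENNReal.div_eq_inv_mul]
          ring
  have hYp : 0 < Y.toReal := ENNReal.toReal_pos hY0 hYt
  have h := key (Y.toReal ^ (1 / ((k:ℝ) + 2))) (by positivity)
  have e1 : ENNReal.ofReal (Y.toReal ^ (1 / ((k:ℝ) + 2))) = Y ^ (1 / ((k:ℝ) + 2)) := by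
    rw [← ENNReal.ofReal_rpow_of_pos hYp, ENNReal.ofReal_toReal hYt]
  have e2 : (Y ^ (1 / ((k:ℝ) + 2))) ^ (k+1) = Y ^ (((k:ℝ) + 1) / (k + 2)) := by
    rw [← ENNReal.rpow_natCast, ← ENNReal.rpow_mul]
    congr 1; push_cast; field_simp
  have e3 : Y / Y ^ (1 / ((k:ℝ) + 2)) = Y ^ (((k:ℝ) + 1) / (k + 2)) := by
    conv_lhs => rw [← ENNReal.rpow_one Y, ← ENNReal.rpow_mul]
    rw [← ENNReal.rpow_sub _ _ hY0 hYt]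
    congr 1; field_simp; ring
  rw [e1, e2, e3] at h
  have h' : X ≤ 3 * Y ^ (((k:ℝ) + 1) / (k + 2)) := by
    refine h.trans (le_of_eq ?_)
    ring
  calc X ^ (((k:ℝ) + 2) / (k + 1)) ≤ (3 * Y ^ (((k:ℝ) + 1) / (k + 2))) ^ (((k:ℝ) + 2) / (k + 1)) := by
        gcongr
    _ = _ := by
        rw [ENNReal.mul_rpow_of_nonneg _ _ hk.le, ← ENNReal.rpow_mul]
        congr 1
        rw [show ((k:ℝ) + 1) / (k + 2) * (((k:ℝ) + 2) / (k + 1)) = 1 by field_simp, ENNReal.rpow_one]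

lemma cons_smul {k : ℕ} (ρ : ℝ) (s : ℝ) (a w : Fin k → ℝ) :
    (Fin.cons s a : Fin (k+1) → ℝ) ⬝ᵥ (Fin.cons ρ (ρ • w)) = ρ * (s + a ⬝ᵥ w) := by
  simp [dotProduct, Fin.sum_univ_succ, Finset.mul_sum, mul_add]
  congr 1
  · ring
  · refine Finset.sum_congr rfl fun i _ => by ring

lemma vset (k : ℕ) (hP : PP k) : ∃ C : ℝ≥0∞, C ≠ ⊤ ∧ ∀ G : Set ((Fin (k+1) → ℝ) × ℝ),
    MeasurableSet G → ∫⁻ a : Fin (k+1) → ℝ, (Rd (k+1) (G.indicator 1) (a, 0)) ^ (k+2) ≤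
      C * volume G ^ (k+1) := by
  obtain ⟨C, hC, h⟩ := hP
  refine ⟨C * (3 ^ (((k:ℝ) + 2) / (k + 1))) ^ (k+1), ?_, fun G hG => ?_⟩
  · refine ENNReal.mul_ne_top hC (ENNReal.pow_ne_top (ENNReal.rpow_ne_top_of_nonneg (by positivity) (by simp)))
  set g : (Fin (k+1) → ℝ) × ℝ → ℝ≥0∞ := G.indicator 1 with hg
  have mg : Measurable g := measurable_one.indicator hG
  set B : ((Fin k → ℝ) × ℝ) → ℝ → ℝ≥0∞ := fun x ρ => g (Fin.cons ρ (ρ • x.1), ρ * x.2) with hB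
  have mB : Measurable (fun p : ((Fin k → ℝ) × ℝ) × ℝ => B p.1 p.2) := by
    refine mg.comp ((meas_cons ?_ ?_).prodMk ?_) <;> fun_prop
  set F : (Fin k → ℝ) × ℝ → ℝ≥0∞ := fun x => ∫⁻ ρ, ENNReal.ofReal |ρ| ^ k * B x ρ with hF
  have mF : Measurable F := by
    refine Measurable.lintegral_prod_right' (f := fun p : ((Fin k → ℝ) × ℝ) × ℝ =>
      ENNReal.ofReal |p.2| ^ k * B p.1 p.2) ?_
    exact Measurable.mul (by fun_prop) mB
  have ae0 : ∀ᵐ ρ : ℝ, ρ ≠ 0 := compl_mem_ae_iff.2 (measure_singleton (0:ℝ))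
  have hR : ∀ s : ℝ, ∀ a : Fin k → ℝ, Rd (k+1) g (Fin.cons s a, 0) = Rd k F (a, s) := by
    intro s a
    unfold Rd
    simp only [zero_add]
    rw [split_lintegral]
    · have : ∀ᵐ ρ : ℝ, (∫⁻ y' : Fin k → ℝ, g (Fin.cons ρ y', (Fin.cons s a : Fin (k+1) → ℝ) ⬝ᵥ Fin.cons ρ y'))
          = ∫⁻ w : Fin k → ℝ, ENNReal.ofReal |ρ| ^ k * B (w, s + a ⬝ᵥ w) ρ := by
        filter_upwards [ae0] with ρ hρ
        rw [scale_lintegral volume _ hρ, lintegral_const_mul]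
        · simp only [cons_smul, Module.finrank_fin_fun, hB]
        · refine mB.comp ((measurable_id.prodMk (Measurable.add (by fun_prop) ?_)).prodMk (by fun_prop))
          exact meas_dot' (by fun_prop) (by fun_prop)
      rw [lintegral_congr_ae this, lintegral_lintegral_swap]
      refine Measurable.aemeasurable ?_
      refine Measurable.mul (by fun_prop) ?_
      refine mB.comp (Measurable.prodMk (Measurable.prodMk (by fun_prop) (Measurable.add (by fun_prop) ?_)) (by fun_prop))
      exact meas_dot' (by fun_prop) (by fun_prop)
    · refine mg.comp (measurable_id.prodMk ?_)
      exact meas_dot' (by fun_prop) (by fun_prop)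
  have hvol : ∫⁻ x, ∫⁻ ρ, ENNReal.ofReal |ρ| ^ (k+1) * B x ρ = volume G := by
    rw [lintegral_lintegral_swap]
    · have : ∀ᵐ ρ : ℝ, (∫⁻ x : (Fin k → ℝ) × ℝ, ENNReal.ofReal |ρ| ^ (k+1) * B x ρ)
          = ∫⁻ x : (Fin k → ℝ) × ℝ, g (Fin.cons ρ x.1, x.2) := by
        filter_upwards [ae0] with ρ hρ
        have : (volume : Measure ((Fin k → ℝ) × ℝ)).IsAddHaarMeasure := by
          rw [Measure.volume_eq_prod]; infer_instance
        have := scale_lintegral (volume : Measure ((Fin k → ℝ) × ℝ))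
          (fun x => g (Fin.cons ρ x.1, x.2)) hρ
        rw [this, lintegral_const_mul]
        · simp [hB]
        · exact mB.comp (measurable_id.prodMk measurable_const)
      rw [lintegral_congr_ae this]
      have h1 : volume G = ∫⁻ x, g x := by
        rw [hg, lintegral_indicator_one hG]
      rw [h1, Measure.volume_eq_prod (Fin (k+1) → ℝ) ℝ, lintegral_prod _ mg.aemeasurable, split_lintegral]
      · refine lintegral_congr fun ρ => ?_
        rw [Measure.volume_eq_prod, lintegral_prod]
        refine (mg.comp (Measurable.prodMk (meas_cons ?_ ?_) ?_)).aemeasurable <;> fun_prop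
      · exact Measurable.lintegral_prod_right' mg
    · exact (Measurable.mul (by fun_prop) mB).aemeasurable
  have hstep : ∫⁻ x, F x ^ (((k:ℝ) + 2) / (k + 1)) ≤ 3 ^ (((k:ℝ) + 2) / (k + 1)) * volume G := by
    calc _ ≤ ∫⁻ x, 3 ^ (((k:ℝ) + 2) / (k + 1)) * ∫⁻ ρ, ENNReal.ofReal |ρ| ^ (k+1) * B x ρ := by
          refine lintegral_mono fun x => one_dim k (B x) ?_ ?_
          · intro ρ
            simp only [hB, hg]
            exact Set.indicator_le_self' (fun _ _ => zero_le) _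
          · exact mB.comp (measurable_const.prodMk measurable_id)
      _ = _ := by
          rw [lintegral_const_mul, hvol]
          refine Measurable.lintegral_prod_right' (f := fun p : ((Fin k → ℝ) × ℝ) × ℝ =>
            ENNReal.ofReal |p.2| ^ (k+1) * B p.1 p.2) ?_
          exact Measurable.mul (by fun_prop) mB
  calc _ = ∫⁻ x, Rd k F x ^ (k+2) := by
        rw [split_lintegral]
        · simp only [hR]
          rw [lintegral_lintegral_swap, Measure.volume_eq_prod, lintegral_prod]
          · exact ((meas_Rd mF).pow_const _).aemeasurable
          · exact ((meas_Rd' mF (by fun_prop) (by fun_prop)).pow_const _).aemeasurable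
        · exact (meas_Rd' mg (by fun_prop) (by fun_prop)).pow_const _
    _ ≤ C * (∫⁻ x, F x ^ (((k:ℝ) + 2) / (k + 1))) ^ (k+1) := h F mF
    _ ≤ C * (3 ^ (((k:ℝ) + 2) / (k + 1)) * volume G) ^ (k+1) := by gcongr
    _ = _ := by rw [mul_pow, mul_assoc]

lemma adj {n : ℕ} {f g : (Fin n → ℝ) × ℝ → ℝ≥0∞} (hf : Measurable f) (hg : Measurable g) :
    ∫⁻ x, Rd n f x * g x = ∫⁻ y, f y * ∫⁻ a : Fin n → ℝ, g (a, y.2 - a ⬝ᵥ y.1) := by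
  have m1 : Measurable (fun p : ((Fin n → ℝ) × ℝ) × (Fin n → ℝ) => f p.1 * g (p.2, p.1.2 - p.2 ⬝ᵥ p.1.1)) := by
    refine Measurable.mul (by fun_prop) (hg.comp (Measurable.prodMk (by fun_prop) (Measurable.sub (by fun_prop) ?_)))
    exact meas_dot' (by fun_prop) (by fun_prop)
  have m2 : Measurable (fun p : ((Fin n → ℝ) × ℝ) × (Fin n → ℝ) => f (p.2, p.1.2 + p.1.1 ⬝ᵥ p.2) * g p.1) := by
    refine Measurable.mul (hf.comp (Measurable.prodMk (by fun_prop) (Measurable.add (by fun_prop) ?_))) (by fun_prop)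
    exact meas_dot' (by fun_prop) (by fun_prop)
  have L : ∫⁻ x, Rd n f x * g x = ∫⁻ a : Fin n → ℝ, ∫⁻ y : Fin n → ℝ, ∫⁻ b : ℝ, f (y, b + a ⬝ᵥ y) * g (a, b) := by
    have : ∀ x, Rd n f x * g x = ∫⁻ y, f (y, x.2 + x.1 ⬝ᵥ y) * g x := by
      intro x
      rw [lintegral_mul_const]
      · rfl
      · refine hf.comp (Measurable.prodMk (by fun_prop) (Measurable.add (by fun_prop) ?_))
        exact meas_dot' (by fun_prop) (by fun_prop)
    simp only [this]
    rw [Measure.volume_eq_prod, lintegral_prod]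
    · refine lintegral_congr fun a => ?_
      rw [lintegral_lintegral_swap]
      exact (m2.comp (f := fun p : ℝ × (Fin n → ℝ) => ((a, p.1), p.2)) (by fun_prop)).aemeasurable
    · exact (Measurable.lintegral_prod_right' m2).aemeasurable
  have Rr : ∫⁻ y, f y * ∫⁻ a : Fin n → ℝ, g (a, y.2 - a ⬝ᵥ y.1) =
      ∫⁻ a : Fin n → ℝ, ∫⁻ y : Fin n → ℝ, ∫⁻ z : ℝ, f (y, z) * g (a, z - a ⬝ᵥ y) := by
    have : ∀ y : (Fin n → ℝ) × ℝ, f y * ∫⁻ a : Fin n → ℝ, g (a, y.2 - a ⬝ᵥ y.1) = ∫⁻ a : Fin n → ℝ, f y * g (a, y.2 - a ⬝ᵥ y.1) := by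
      intro y
      rw [lintegral_const_mul]
      refine hg.comp (Measurable.prodMk (by fun_prop) (Measurable.sub (by fun_prop) ?_))
      exact meas_dot' (by fun_prop) (by fun_prop)
    simp only [this]
    rw [lintegral_lintegral_swap]
    · refine lintegral_congr fun a => ?_
      rw [Measure.volume_eq_prod, lintegral_prod]
      exact (m1.comp (f := fun p : (Fin n → ℝ) × ℝ => (p, a)) (by fun_prop)).aemeasurable
    · exact m1.aemeasurable
  rw [L, Rr]
  refine lintegral_congr fun a => lintegral_congr fun y => ?_
  rw [← lintegral_add_right_eq_self (fun z => f (y, z) * g (a, z - a ⬝ᵥ y)) (a ⬝ᵥ y)]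
  simp

lemma minkowski {α : Type*} [MeasurableSpace α] (μ : Measure α) (S : Finset ℤ) (u : ℤ → α → ℝ≥0∞)
    (hu : ∀ m, Measurable (u m)) {p : ℝ} (hp : 1 ≤ p) :
    (∫⁻ a, (∑ m ∈ S, u m a) ^ p ∂μ) ^ (1 / p) ≤ ∑ m ∈ S, (∫⁻ a, u m a ^ p ∂μ) ^ (1 / p) := by
  classical
  have hp0 : 0 < p := by linarith
  induction S using Finset.induction_on with
  | empty => simp [ENNReal.zero_rpow_of_pos hp0, hp0]
  | insert k S hk ih =>
    simp only [Finset.sum_insert hk]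
    refine le_trans (ENNReal.lintegral_Lp_add_le (f := u k) (g := fun a => ∑ m ∈ S, u m a)
      (hu k).aemeasurable ?_ hp) ?_
    · exact (Finset.measurable_sum _ fun i _ => hu i).aemeasurable
    · gcongr

lemma Rd_sum {n : ℕ} (S : Finset ℤ) (w : ℤ → ℝ≥0∞) (g : ℤ → (Fin n → ℝ) × ℝ → ℝ≥0∞)
    (hg : ∀ m, Measurable (g m)) (x : (Fin n → ℝ) × ℝ) :
    Rd n (fun y => ∑ m ∈ S, w m * g m y) x = ∑ m ∈ S, w m * Rd n (g m) x := by
  unfold Rd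
  have hm : ∀ m, Measurable (fun y : Fin n → ℝ => g m (y, x.2 + x.1 ⬝ᵥ y)) := fun m =>
    (hg m).comp (measurable_id.prodMk (measurable_const.add (meas_dot' measurable_const measurable_id)))
  rw [lintegral_finsetSum]
  · refine Finset.sum_congr rfl fun m _ => ?_
    rw [lintegral_const_mul _ (hm m)]
  · intro m _
    exact (hm m).const_mul _

lemma Rd_translate {n : ℕ} (g : (Fin n → ℝ) × ℝ → ℝ≥0∞) (a y : Fin n → ℝ) (z : ℝ) :
    Rd n g (a, z - a ⬝ᵥ y) = Rd n (fun x => g (x + (y, z))) (a, 0) := by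
  unfold Rd
  rw [← lintegral_add_right_eq_self _ y]
  refine lintegral_congr fun w => ?_
  congr 1
  simp only [Prod.mk_add_mk, dotProduct_add, Prod.mk.injEq, true_and]
  ring

/-- Vertex estimate for simple functions. -/
lemma vsum (k : ℕ) {C : ℝ≥0∞} (hC : ∀ G : Set ((Fin (k+1) → ℝ) × ℝ),
    MeasurableSet G → ∫⁻ a : Fin (k+1) → ℝ, (Rd (k+1) (G.indicator 1) (a, 0)) ^ (k+2) ≤
      C * volume G ^ (k+1)) (S : Finset ℤ) (w : ℤ → ℝ≥0∞) (G : ℤ → Set ((Fin (k+1) → ℝ) × ℝ))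
    (hG : ∀ m, MeasurableSet (G m)) (y : Fin (k+1) → ℝ) (z : ℝ) :
    ∫⁻ a, (∑ m ∈ S, w m * Rd (k+1) ((G m).indicator 1) (a, z - a ⬝ᵥ y)) ^ (k+2) ≤
      C * (∑ m ∈ S, w m * volume (G m) ^ (((k:ℝ)+1)/(k+2))) ^ (k+2) := by
  have mR : ∀ m, Measurable (fun a : Fin (k+1) → ℝ => Rd (k+1) ((G m).indicator 1) (a, z - a ⬝ᵥ y)) := fun m =>
    meas_Rd' (measurable_one.indicator (hG m)) measurable_id
      (measurable_const.sub (meas_dot' measurable_id measurable_const))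
  have hpp : (0:ℝ) < (k:ℝ) + 2 := by positivity
  have h1 : ∀ m, (∫⁻ a, (w m * Rd (k+1) ((G m).indicator 1) (a, z - a ⬝ᵥ y)) ^ ((k:ℝ)+2)) ^ (1/((k:ℝ)+2))
      ≤ C ^ (1/((k:ℝ)+2)) * (w m * volume (G m) ^ (((k:ℝ)+1)/(k+2))) := by
    intro m
    simp only [ENNReal.mul_rpow_of_nonneg _ _ hpp.le]
    rw [lintegral_const_mul _ ((mR m).pow_const _), ENNReal.mul_rpow_of_nonneg _ _ (by positivity),
      ← ENNReal.rpow_mul, mul_one_div_cancel hpp.ne', ENNReal.rpow_one]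
    set G' := (fun x => x + (y, z)) ⁻¹' (G m) with hG'
    have mG' : MeasurableSet G' := (hG m).preimage (by fun_prop)
    have e : ∀ a, Rd (k+1) ((G m).indicator 1) (a, z - a ⬝ᵥ y) = Rd (k+1) (G'.indicator 1) (a, 0) := by
      intro a
      rw [Rd_translate]
      rfl
    have ev : volume G' = volume (G m) := by
      rw [hG', Measure.volume_eq_prod]
      exact measure_preimage_add_right _ _ _
    have h2 := hC G' mG'
    rw [ev] at h2
    simp only [e]
    have e2 : ∀ x : ℝ≥0∞, x ^ ((k:ℝ)+2) = x ^ (k+2) := by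
      intro x
      rw [← ENNReal.rpow_natCast]; push_cast; rfl
    simp only [e2]
    calc _ ≤ w m * (C * volume (G m) ^ (k+1)) ^ (1/((k:ℝ)+2)) := by gcongr
      _ = _ := by
        rw [ENNReal.mul_rpow_of_nonneg _ _ (by positivity), ← ENNReal.rpow_natCast, ← ENNReal.rpow_mul]
        rw [mul_left_comm, show (((k + 1 : ℕ) : ℝ) * (1 / ((k:ℝ) + 2))) = ((k:ℝ) + 1) / (k + 2) by
          push_cast; field_simp]
  have h := (minkowski volume S (fun m a => w m * Rd (k+1) ((G m).indicator 1) (a, z - a ⬝ᵥ y))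
    (fun m => (mR m).const_mul _) (p := (k:ℝ)+2) (by linarith [(Nat.cast_nonneg k : (0:ℝ) ≤ k)])).trans
    (Finset.sum_le_sum fun m _ => h1 m)
  rw [← Finset.mul_sum, one_div, ENNReal.rpow_inv_le_iff hpp, ENNReal.mul_rpow_of_nonneg _ _ hpp.le,
    ENNReal.rpow_inv_rpow hpp.ne'] at h
  have e2 : ∀ x : ℝ≥0∞, x ^ ((k:ℝ)+2) = x ^ (k+2) := by
    intro x
    rw [← ENNReal.rpow_natCast]; push_cast; rfl
  simpa only [e2] using h

lemma mixed (k : ℕ) {C : ℝ≥0∞} (hC : ∀ G : Set ((Fin (k+1) → ℝ) × ℝ),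
    MeasurableSet G → ∫⁻ a : Fin (k+1) → ℝ, (Rd (k+1) (G.indicator 1) (a, 0)) ^ (k+2) ≤
      C * volume G ^ (k+1)) (S : Finset ℤ) (w : ℤ → ℝ≥0∞) (G : ℤ → Set ((Fin (k+1) → ℝ) × ℝ))
    (hG : ∀ m, MeasurableSet (G m)) (H : Set ((Fin (k+1) → ℝ) × ℝ)) (hH : MeasurableSet H) :
    ∫⁻ x, Rd (k+1) (H.indicator 1) x * (∑ m ∈ S, w m * Rd (k+1) ((G m).indicator 1) x) ^ (k+2) ≤
      C * (volume H * (∑ m ∈ S, w m * volume (G m) ^ (((k:ℝ)+1)/(k+2))) ^ (k+2)) := by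
  rw [adj (measurable_one.indicator hH)]
  · have hle : ∀ y : (Fin (k+1) → ℝ) × ℝ, H.indicator (1 : (Fin (k+1) → ℝ) × ℝ → ℝ≥0∞) y *
        ∫⁻ a, (∑ m ∈ S, w m * Rd (k+1) ((G m).indicator 1) (a, y.2 - a ⬝ᵥ y.1)) ^ (k+2) ≤
        H.indicator (1 : (Fin (k+1) → ℝ) × ℝ → ℝ≥0∞) y *
        (C * (∑ m ∈ S, w m * volume (G m) ^ (((k:ℝ)+1)/(k+2))) ^ (k+2)) := by
      intro y
      have := vsum k hC S w G hG y.1 y.2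
      gcongr
    refine (lintegral_mono hle).trans ?_
    rw [lintegral_mul_const _ (measurable_one.indicator hH), lintegral_indicator_one hH]
    exact le_of_eq (by ring)
  · refine Measurable.pow_const (Finset.measurable_sum _ fun m _ => Measurable.const_mul ?_ _) _
    exact meas_Rd (measurable_one.indicator (hG m))

lemma pow_step (a b : ℝ≥0∞) (N : ℕ) : (a + b) ^ (N+1) ≤ b ^ (N+1) + (N+1) * (a * (a + b) ^ N) := by
  induction N with
  | zero => simp [add_comm]
  | succ N ih =>
    calc (a + b) ^ (N+1+1) = a * (a+b)^(N+1) + b * (a+b)^(N+1) := by ring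
      _ ≤ a * (a+b)^(N+1) + b * (b ^ (N+1) + (N+1) * (a * (a + b) ^ N)) := by gcongr
      _ = a * (a+b)^(N+1) + b ^ (N+1+1) + (N+1) * (a * (b * (a + b) ^ N)) := by ring
      _ ≤ a * (a+b)^(N+1) + b ^ (N+1+1) + (N+1) * (a * ((a+b) * (a + b) ^ N)) := by
          gcongr; exact le_add_self
      _ = _ := by push_cast; ring

lemma pow_sum (S : Finset ℤ) (u : ℤ → ℝ≥0∞) (N : ℕ) :
    (∑ m ∈ S, u m) ^ (N+1) ≤ (N+1) * ∑ k ∈ S, u k * (∑ m ∈ S with k ≤ m, u m) ^ N := by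
  induction S using Finset.induction_on_min with
  | empty => simp
  | insert k S hk ih =>
    have hkS : k ∉ S := fun h => lt_irrefl _ (hk k h)
    have e1 : ∀ j ∈ S, (insert k S).filter (fun m => j ≤ m) = S.filter (fun m => j ≤ m) := by
      intro j hj
      rw [Finset.filter_insert, if_neg (not_le.2 (hk j hj))]
    have e2 : (insert k S).filter (fun m => k ≤ m) = insert k S := by
      rw [Finset.filter_eq_self]
      intro x hx
      rcases Finset.mem_insert.1 hx with rfl | hx
      · exact le_rfl
      · exact (hk x hx).le
    rw [Finset.sum_insert hkS, Finset.sum_insert hkS, e2, Finset.sum_insert hkS]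
    have e3 : ∑ x ∈ S, u x * (∑ m ∈ insert k S with x ≤ m, u m) ^ N =
        ∑ x ∈ S, u x * (∑ m ∈ S with x ≤ m, u m) ^ N :=
      Finset.sum_congr rfl (fun j hj => by rw [e1 j hj])
    rw [e3]
    refine (pow_step _ _ N).trans ?_
    rw [mul_add, add_comm]
    gcongr

/-- geometric sum over the integers -/
lemma geom_int {ρ : ℝ≥0∞} (hρ : ρ < 1) : ∑' m : ℤ, ρ ^ m.natAbs ≠ ⊤ := by
  have h1 : HasSum (fun n : ℕ => ρ ^ (n : ℤ).natAbs) (1 - ρ)⁻¹ := by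
    simpa using (ENNReal.summable (f := fun n : ℕ => ρ ^ n)).hasSum
  have h2 : HasSum (fun n : ℕ => ρ ^ (-((n : ℤ) + 1)).natAbs) (ρ * (1 - ρ)⁻¹) := by
    have : ∀ n : ℕ, ρ ^ (-((n : ℤ) + 1)).natAbs = ρ * ρ ^ n := by
      intro n
      rw [show (-((n : ℤ) + 1)).natAbs = n + 1 by omega]; ring
    simp only [this]
    have := (ENNReal.summable (f := fun n : ℕ => ρ * ρ ^ n)).hasSum
    rwa [ENNReal.tsum_mul_left, ENNReal.tsum_geometric] at this
  have := HasSum.of_nat_of_neg_add_one (f := fun m : ℤ => ρ ^ m.natAbs) h1 h2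
  rw [this.tsum_eq]
  have h3 : (1 - ρ)⁻¹ ≠ ⊤ := by simpa [tsub_eq_zero_iff_le] using hρ
  exact ENNReal.add_ne_top.2 ⟨h3, ENNReal.mul_ne_top (hρ.trans ENNReal.one_lt_top).ne h3⟩

lemma geom_shift (ρ : ℝ≥0∞) (S : Finset ℤ) (k : ℤ) :
    ∑ m ∈ S, ρ ^ (m - k).natAbs ≤ ∑' m : ℤ, ρ ^ m.natAbs := by
  refine (ENNReal.sum_le_tsum S).trans ?_
  exact le_of_eq ((Equiv.subRight k).tsum_eq (fun m : ℤ => ρ ^ m.natAbs))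

/-- discrete convolution inequality -/
lemma discrete (N : ℕ) {ρ : ℝ≥0∞} (hρ : ρ < 1) : ∃ A : ℝ≥0∞, A ≠ ⊤ ∧ ∀ (S : Finset ℤ) (β : ℤ → ℝ≥0∞),
    ∑ k ∈ S, β k * (∑ m ∈ S with k ≤ m, ρ ^ (m - k).natAbs * β m) ^ (N+1) ≤ A * ∑ k ∈ S, β k ^ (N+2) := by
  set B := ∑' m : ℤ, ρ ^ m.natAbs with hB
  have hBt : B ≠ ⊤ := geom_int hρ
  refine ⟨B ^ N * (2 * B), by finiteness, fun S β => ?_⟩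
  have h1 : ∀ k, (∑ m ∈ S with k ≤ m, ρ ^ (m - k).natAbs * β m) ^ (N+1) ≤
      B ^ N * ∑ m ∈ S, ρ ^ (m - k).natAbs * β m ^ (N+1) := by
    intro k
    have hN : (1:ℝ) ≤ (N:ℝ)+1 := by linarith [(Nat.cast_nonneg N : (0:ℝ) ≤ N)]
    have := ENNReal.inner_le_weight_mul_Lp_of_nonneg S hN (fun m => ρ ^ (m - k).natAbs) β
    have h2 : ∑ m ∈ S with k ≤ m, ρ ^ (m - k).natAbs * β m ≤ ∑ m ∈ S, ρ ^ (m - k).natAbs * β m :=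
      Finset.sum_le_sum_of_subset (Finset.filter_subset _ _)
    calc _ ≤ ((∑ m ∈ S, ρ ^ (m - k).natAbs) ^ (1 - ((N:ℝ)+1)⁻¹) *
          (∑ m ∈ S, ρ ^ (m - k).natAbs * β m ^ ((N:ℝ)+1)) ^ ((N:ℝ)+1)⁻¹) ^ (N+1) := by
          gcongr; exact h2.trans this
      _ ≤ (B ^ (1 - ((N:ℝ)+1)⁻¹) *
          (∑ m ∈ S, ρ ^ (m - k).natAbs * β m ^ ((N:ℝ)+1)) ^ ((N:ℝ)+1)⁻¹) ^ (N+1) := by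
          gcongr
          · rw [sub_nonneg]; exact inv_le_one_of_one_le₀ hN
          · exact geom_shift ρ S k
      _ = _ := by
          rw [mul_pow]
          congr 1
          · rw [← ENNReal.rpow_natCast, ← ENNReal.rpow_natCast, ← ENNReal.rpow_mul]
            congr 1; push_cast; field_simp; ring
          · rw [← ENNReal.rpow_natCast, ← ENNReal.rpow_mul]
            rw [show ((N:ℝ)+1)⁻¹ * ((N+1 : ℕ):ℝ) = 1 by push_cast; field_simp, ENNReal.rpow_one]
            refine Finset.sum_congr rfl fun m _ => ?_
            rw [← ENNReal.rpow_natCast (β m)]; push_cast; rfl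
  have h3 : ∀ x y : ℝ≥0∞, x * y ^ (N+1) ≤ x ^ (N+2) + y ^ (N+2) := by
    intro x y
    rcases le_total x y with h | h
    · calc x * y ^ (N+1) ≤ y * y ^ (N+1) := by gcongr
        _ = y ^ (N+2) := by ring
        _ ≤ _ := le_add_self
    · calc x * y ^ (N+1) ≤ x * x ^ (N+1) := by gcongr
        _ = x ^ (N+2) := by ring
        _ ≤ _ := le_self_add
  calc _ ≤ ∑ k ∈ S, β k * (B ^ N * ∑ m ∈ S, ρ ^ (m - k).natAbs * β m ^ (N+1)) := by
        gcongr with k; exact h1 k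
    _ = B ^ N * ∑ k ∈ S, ∑ m ∈ S, ρ ^ (m - k).natAbs * (β k * β m ^ (N+1)) := by
        rw [Finset.mul_sum]
        refine Finset.sum_congr rfl fun k _ => ?_
        simp only [Finset.mul_sum]
        refine Finset.sum_congr rfl fun m _ => by ring
    _ ≤ B ^ N * ∑ k ∈ S, ∑ m ∈ S, ρ ^ (m - k).natAbs * (β k ^ (N+2) + β m ^ (N+2)) := by
        gcongr; exact h3 _ _
    _ = B ^ N * (∑ k ∈ S, (∑ m ∈ S, ρ ^ (m - k).natAbs) * β k ^ (N+2) +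
          ∑ m ∈ S, (∑ k ∈ S, ρ ^ (k - m).natAbs) * β m ^ (N+2)) := by
        congr 1
        simp only [mul_add, Finset.sum_add_distrib, Finset.sum_mul]
        congr 1
        rw [Finset.sum_comm]
        refine Finset.sum_congr rfl fun m _ => Finset.sum_congr rfl fun k _ => ?_
        rw [show (m - k).natAbs = (k - m).natAbs by omega]
    _ ≤ B ^ N * (∑ k ∈ S, B * β k ^ (N+2) + ∑ m ∈ S, B * β m ^ (N+2)) := by
        gcongr <;> exact geom_shift ρ S _
    _ = _ := by
        rw [← Finset.mul_sum]; ring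

lemma two_add (x y : ℝ) : (2:ℝ≥0∞) ^ x * (2:ℝ≥0∞) ^ y = 2 ^ (x + y) :=
  (ENNReal.rpow_add x y (by simp) (by simp)).symm

lemma dualbd (k : ℕ) (hP : PP k) : ∃ A : ℝ≥0∞, A ≠ ⊤ ∧ ∀ (S : Finset ℤ) (w : ℤ → ℝ≥0∞)
    (G : ℤ → Set ((Fin (k+1) → ℝ) × ℝ)), (∀ m, MeasurableSet (G m)) →
    (∀ m ∈ S, volume (G m) ≤ 2 ^ (m:ℝ)) →
    ∫⁻ x, (∑ m ∈ S, w m * Rd (k+1) ((G m).indicator 1) x) ^ (k+3) ≤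
      A * ∑ m ∈ S, (w m * 2 ^ ((m:ℝ) * ((k+2)/(k+3)))) ^ (k+3) := by
  obtain ⟨C, hC, hV⟩ := vset k hP
  set ε : ℝ := 1 / ((k+2)*(k+3)) with hε
  have hε0 : 0 < ε := by positivity
  set ρ : ℝ≥0∞ := 2 ^ (-ε) with hρ
  have hρ1 : ρ < 1 := ENNReal.rpow_lt_one_of_one_lt_of_neg (by norm_num) (by linarith)
  obtain ⟨A, hA, hD⟩ := discrete (k+1) hρ1
  refine ⟨((k+2:ℕ)+1) * (C * A), by finiteness, fun S w G hG hS => ?_⟩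
  have mR : ∀ m, Measurable (Rd (k+1) ((G m).indicator 1)) := fun m =>
    meas_Rd (measurable_one.indicator (hG m))
  set β : ℤ → ℝ≥0∞ := fun m => w m * 2 ^ ((m:ℝ) * ((k+2)/(k+3))) with hβ
  have term : ∀ j ∈ S, w j * (C * (volume (G j) * (∑ m ∈ S with j ≤ m, w m * volume (G m) ^ (((k:ℝ)+1)/(k+2))) ^ (k+2)))
      ≤ C * (β j * (∑ m ∈ S with j ≤ m, ρ ^ (m - j).natAbs * β m) ^ (k+2)) := by
    intro j hj
    have e1 : ∀ m : ℤ, j ≤ m → ρ ^ (m - j).natAbs * β m =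
        2 ^ ((j:ℝ) * ε) * (w m * (2 ^ (m:ℝ)) ^ (((k:ℝ)+1)/(k+2))) := by
      intro m hm
      have : (((m - j).natAbs : ℕ) : ℝ) = (m:ℝ) - j := by
        have h : (((m - j).natAbs : ℕ) : ℤ) = m - j := by omega
        have h2 : (((m - j).natAbs : ℤ) : ℝ) = ((m - j : ℤ) : ℝ) := by rw [h]
        push_cast at h2
        rw [← h2]; simp
      rw [hρ, ← ENNReal.rpow_natCast, ← ENNReal.rpow_mul, this, hβ, ← ENNReal.rpow_mul]
      simp only
      rw [mul_left_comm, two_add, mul_left_comm, two_add]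
      congr 2
      rw [hε]; field_simp; ring
    have e2 : w j * (2:ℝ≥0∞) ^ (j:ℝ) = β j * (2 ^ ((j:ℝ) * ε)) ^ (k+2) := by
      rw [hβ, ← ENNReal.rpow_natCast, ← ENNReal.rpow_mul]
      simp only
      rw [mul_assoc, two_add]
      congr 2
      rw [hε]; push_cast; field_simp; ring
    calc _ ≤ w j * (C * (2 ^ (j:ℝ) * (∑ m ∈ S with j ≤ m, w m * (2 ^ (m:ℝ)) ^ (((k:ℝ)+1)/(k+2))) ^ (k+2))) := by
          gcongr with m hm
          · exact hS j hj
          · exact hS m (Finset.mem_filter.1 hm).1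
      _ = C * ((w j * 2 ^ (j:ℝ)) * (∑ m ∈ S with j ≤ m, w m * (2 ^ (m:ℝ)) ^ (((k:ℝ)+1)/(k+2))) ^ (k+2)) := by ring
      _ = C * (β j * (∑ m ∈ S with j ≤ m, 2 ^ ((j:ℝ) * ε) * (w m * (2 ^ (m:ℝ)) ^ (((k:ℝ)+1)/(k+2)))) ^ (k+2)) := by
          rw [e2, ← Finset.mul_sum, mul_pow]; ring
      _ = _ := by
          congr 3
          refine Finset.sum_congr rfl fun m hm => (e1 m (Finset.mem_filter.1 hm).2).symm
  calc _ ≤ ∫⁻ x, ((k+2:ℕ)+1) * ∑ j ∈ S, w j * (Rd (k+1) ((G j).indicator 1) x *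
          (∑ m ∈ S with j ≤ m, w m * Rd (k+1) ((G m).indicator 1) x) ^ (k+2)) := by
        refine lintegral_mono fun x => ?_
        refine (pow_sum S _ (k+2)).trans (le_of_eq ?_)
        congr 1
        exact Finset.sum_congr rfl fun j _ => by rw [mul_assoc]
    _ = ((k+2:ℕ)+1) * ∑ j ∈ S, w j * ∫⁻ x, (Rd (k+1) ((G j).indicator 1) x *
          (∑ m ∈ S with j ≤ m, w m * Rd (k+1) ((G m).indicator 1) x) ^ (k+2)) := by
        have hm : ∀ j, Measurable (fun x => Rd (k+1) ((G j).indicator 1) x *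
          (∑ m ∈ S with j ≤ m, w m * Rd (k+1) ((G m).indicator 1) x) ^ (k+2)) := fun j =>
          (mR j).mul ((Finset.measurable_sum _ fun m _ => (mR m).const_mul _).pow_const _)
        rw [lintegral_const_mul, lintegral_finsetSum]
        · congr 1
          exact Finset.sum_congr rfl fun j _ => lintegral_const_mul _ (hm j)
        · exact fun j _ => (hm j).const_mul _
        · exact Finset.measurable_sum _ fun j _ => (hm j).const_mul _
    _ ≤ ((k+2:ℕ)+1) * ∑ j ∈ S, w j * (C * (volume (G j) * (∑ m ∈ S with j ≤ m, w m * volume (G m) ^ (((k:ℝ)+1)/(k+2))) ^ (k+2))) := by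
        gcongr with j hj
        exact mixed k hV _ w G hG _ (hG j)
    _ ≤ ((k+2:ℕ)+1) * ∑ j ∈ S, C * (β j * (∑ m ∈ S with j ≤ m, ρ ^ (m - j).natAbs * β m) ^ (k+2)) := by
        gcongr ((k+2:ℕ)+1) * ?_
        exact Finset.sum_le_sum term
    _ ≤ ((k+2:ℕ)+1) * (C * (A * ∑ m ∈ S, β m ^ (k+3))) := by
        rw [← Finset.mul_sum]
        gcongr
        exact hD S β
    _ = _ := by ring

lemma refl_pow {n : ℕ} {g : (Fin n → ℝ) × ℝ → ℝ≥0∞} (hg : Measurable g) (q : ℝ) :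
    ∫⁻ y : (Fin n → ℝ) × ℝ, (∫⁻ a : Fin n → ℝ, g (a, y.2 - a ⬝ᵥ y.1)) ^ q = ∫⁻ y, Rd n g y ^ q := by
  have h : MeasurePreserving (Prod.map (fun x : Fin n → ℝ => -x) (id : ℝ → ℝ)) volume volume :=
    (Measure.measurePreserving_neg (volume : Measure (Fin n → ℝ))).prod (MeasurePreserving.id volume)
  rw [← h.lintegral_comp ((meas_Rd hg).pow_const q)]
  refine lintegral_congr fun y => ?_
  unfold Rd
  congr 1
  refine lintegral_congr fun a => ?_
  simp [dotProduct_comm, sub_eq_add_neg]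

/-- Discrete Lorentz bound. -/
def LL (n : ℕ) : Prop := ∃ K : ℝ≥0∞, K ≠ ⊤ ∧ ∀ f : (Fin n → ℝ) × ℝ → ℝ≥0∞, Measurable f →
  ∀ (S : Finset ℤ) (G : ℤ → Set ((Fin n → ℝ) × ℝ)) (lam : ℤ → ℝ≥0∞), (∀ m, MeasurableSet (G m)) →
    (∀ m, lam m ≠ ⊤) → (∀ m ∈ S, volume (G m) ≤ 2 ^ (m:ℝ)) → (∀ m ∈ S, 2 ^ (m:ℝ) ≤ 2 * volume (G m)) →
    (∀ m ∈ S, ∀ x ∈ G m, lam m ≤ Rd n f x) →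
    ∑ m ∈ S, (lam m * 2 ^ ((m:ℝ) / (n+2))) ^ (((n:ℝ)+2)/(n+1)) ≤ K * ∫⁻ x, f x ^ (((n:ℝ)+2)/(n+1))

lemma LL_succ (k : ℕ) (hP : PP k) : LL (k+1) := by
  obtain ⟨A, hA, hD⟩ := dualbd k hP
  set p : ℝ := ((k:ℝ)+3)/(k+2) with hp
  set q : ℝ := (k:ℝ)+3 with hq
  have hp0 : 0 < p := by positivity
  have hq0 : 0 < q := by positivity
  have hpq : p.HolderConjugate q := by
    rw [Real.holderConjugate_iff]
    constructor
    · rw [hp, lt_div_iff₀ (by positivity)]; linarith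
    · rw [hp, hq]; field_simp; ring
  refine ⟨(2 * A ^ (1/q)) ^ p, by finiteness, fun f hf S G lam hG hl h1 h2 h3 => ?_⟩
  have ep : (((k+1:ℕ):ℝ)+2)/((k+1:ℕ)+1) = p := by rw [hp]; push_cast; ring
  have eq' : ((k+1:ℕ):ℝ)+2 = q := by rw [hq]; push_cast; ring
  rw [ep, eq']
  set a : ℤ → ℝ≥0∞ := fun m => lam m * 2 ^ ((m:ℝ)/q) with ha
  have haT : ∀ m, a m ≠ ⊤ := fun m => ENNReal.mul_ne_top (hl m) (by finiteness)
  set T := ∑ m ∈ S, a m ^ p with hT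
  have hTt : T ≠ ⊤ := by
    rw [hT, ENNReal.sum_ne_top]
    intro m _
    exact ENNReal.rpow_ne_top_of_nonneg hp0.le (haT m)
  rcases eq_or_ne T 0 with hT0 | hT0
  · rw [hT0]; exact zero_le
  set w : ℤ → ℝ≥0∞ := fun m => a m ^ (p-1) * 2 ^ (-((m:ℝ)/p)) with hw
  have hpm : 0 < p - 1 := by have := hpq.lt; linarith
  have hpqs : 1/p + 1/q = 1 := by have := hpq.inv_add_inv_eq_one; simpa using this
  have w1 : ∀ m, w m * (lam m * 2 ^ (m:ℝ)) = a m ^ p := by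
    intro m
    have : a m ^ p = a m ^ (p-1) * a m := by
      conv_rhs => rw [← ENNReal.rpow_one (a m), ← ENNReal.rpow_mul]
      rw [← ENNReal.rpow_add_of_nonneg _ _ (by linarith) (by norm_num)]
      congr 1; ring
    have e : (2:ℝ≥0∞) ^ ((m:ℝ)/q) = 2 ^ (-((m:ℝ)/p)) * 2 ^ (m:ℝ) := by
      rw [two_add]; congr 1
      have : (m:ℝ) * (1/p+1/q) = m := by rw [hpqs]; ring
      linarith [this, show (m:ℝ) * (1/p+1/q) = m/p + m/q by ring]
    calc w m * (lam m * 2 ^ (m:ℝ)) = a m ^ (p-1) * (lam m * (2 ^ (-((m:ℝ)/p)) * 2 ^ (m:ℝ))) := by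
          rw [hw]; ring
      _ = a m ^ (p-1) * a m := by rw [← e]
      _ = _ := this.symm
  have w2 : ∀ m, (w m * 2 ^ ((m:ℝ) * (((k:ℝ)+2)/q))) ^ (k+3) = a m ^ p := by
    intro m
    rw [hw]
    simp only
    rw [mul_assoc, two_add, show -((m:ℝ)/p) + m * (((k:ℝ)+2)/q) = 0 by rw [hp]; field_simp; ring,
      ENNReal.rpow_zero, mul_one, ← ENNReal.rpow_natCast, ← ENNReal.rpow_mul]
    congr 1
    rw [hp]; push_cast; field_simp; ring
  set g : (Fin (k+1) → ℝ) × ℝ → ℝ≥0∞ := fun x => ∑ m ∈ S, w m * (G m).indicator 1 x with hg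
  have mi : ∀ m, Measurable ((G m).indicator (1 : (Fin (k+1) → ℝ) × ℝ → ℝ≥0∞)) := fun m =>
    measurable_one.indicator (hG m)
  have mg : Measurable g := Finset.measurable_sum _ fun m _ => (mi m).const_mul _
  have mRf := meas_Rd hf
  have s1 : T ≤ 2 * ∫⁻ x, Rd (k+1) f x * g x := by
    have e1 : ∫⁻ x, Rd (k+1) f x * g x = ∑ m ∈ S, w m * ∫⁻ x, Rd (k+1) f x * (G m).indicator 1 x := by
      have : ∀ x, Rd (k+1) f x * g x = ∑ m ∈ S, w m * (Rd (k+1) f x * (G m).indicator 1 x) := by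
        intro x
        rw [hg]; simp only
        rw [Finset.mul_sum]
        exact Finset.sum_congr rfl fun m _ => by ring
      simp only [this]
      rw [lintegral_finsetSum]
      · exact Finset.sum_congr rfl fun m _ => lintegral_const_mul _ (mRf.mul (mi m))
      · exact fun m _ => (mRf.mul (mi m)).const_mul _
    rw [e1, hT, Finset.mul_sum]
    refine Finset.sum_le_sum fun m hm => ?_
    rw [← w1 m]
    have : lam m * volume (G m) ≤ ∫⁻ x, Rd (k+1) f x * (G m).indicator 1 x := by
      rw [← lintegral_indicator_one (hG m), ← lintegral_const_mul _ (mi m)]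
      refine lintegral_mono fun x => ?_
      by_cases hx : x ∈ G m
      · simpa [hx] using h3 m hm x hx
      · simp [hx]
    calc w m * (lam m * 2 ^ (m:ℝ)) ≤ w m * (lam m * (2 * volume (G m))) := by
          gcongr; exact h2 m hm
      _ = 2 * (w m * (lam m * volume (G m))) := by ring
      _ ≤ _ := by gcongr
  have s2 : ∫⁻ x, Rd (k+1) f x * g x ≤ (∫⁻ x, f x ^ p) ^ (1/p) * (A * T) ^ (1/q) := by
    rw [adj hf mg]
    refine (ENNReal.lintegral_mul_le_Lp_mul_Lq volume hpq hf.aemeasurable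
      (g := fun y : (Fin (k+1) → ℝ) × ℝ => ∫⁻ a : Fin (k+1) → ℝ, g (a, y.2 - a ⬝ᵥ y.1)) ?_).trans ?_
    · refine (Measurable.lintegral_prod_right' (f := fun P : ((Fin (k+1) → ℝ) × ℝ) × (Fin (k+1) → ℝ) =>
        g (P.2, P.1.2 - P.2 ⬝ᵥ P.1.1)) ?_).aemeasurable
      refine mg.comp (Measurable.prodMk (by fun_prop) (Measurable.sub (by fun_prop) ?_))
      exact meas_dot' (by fun_prop) (by fun_prop)
    · rw [refl_pow mg]
      have := hD S w G hG h1
      simp only [w2] at this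
      have e : ∀ x, Rd (k+1) g x ^ q = (∑ m ∈ S, w m * Rd (k+1) ((G m).indicator 1) x) ^ (k+3) := by
        intro x
        rw [hg, Rd_sum S w _ mi, ← ENNReal.rpow_natCast]
        congr 1; rw [hq]; push_cast; ring
      simp only [e]
      gcongr
  have s3 : T ≤ 2 * A ^ (1/q) * (∫⁻ x, f x ^ p) ^ (1/p) * T ^ (1/q) := by
    refine s1.trans ((mul_le_mul_right s2 2).trans (le_of_eq ?_))
    rw [ENNReal.mul_rpow_of_nonneg _ _ (by positivity)]
    ring
  have s4 : T ^ (1/p) ≤ 2 * A ^ (1/q) * (∫⁻ x, f x ^ p) ^ (1/p) := by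
    have hz : T ^ (1/q) ≠ 0 := by simp [ENNReal.rpow_eq_zero_iff, hT0, hTt]
    have ht : T ^ (1/q) ≠ ⊤ := by finiteness
    refine (ENNReal.mul_le_mul_iff_left hz ht).1 ?_
    rw [← ENNReal.rpow_add _ _ hT0 hTt, hpqs, ENNReal.rpow_one]
    exact s3
  rw [one_div, ENNReal.rpow_inv_le_iff hp0, ENNReal.mul_rpow_of_nonneg _ _ hp0.le,
    ENNReal.rpow_inv_rpow hp0.ne'] at s4
  exact s4

lemma dyadic {v : ℝ≥0∞} (h0 : v ≠ 0) (ht : v ≠ ⊤) : ∃ m : ℤ, v ≤ 2 ^ (m:ℝ) ∧ 2 ^ (m:ℝ) ≤ 2 * v := by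
  obtain ⟨j, hj⟩ := ENNReal.exists_mem_Ioc_zpow h0 ht (y := 2) (by norm_num) (by simp)
  refine ⟨j+1, ?_, ?_⟩
  · rw [ENNReal.rpow_intCast]; exact hj.2
  · rw [ENNReal.rpow_intCast, ENNReal.zpow_add (by simp) (by simp), mul_comm, zpow_one]
    gcongr
    exact hj.1.le

lemma single {n : ℕ} {K : ℝ≥0∞} {f : (Fin n → ℝ) × ℝ → ℝ≥0∞}
    (hK : ∀ (S : Finset ℤ) (G : ℤ → Set ((Fin n → ℝ) × ℝ)) (lam : ℤ → ℝ≥0∞), (∀ m, MeasurableSet (G m)) →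
    (∀ m, lam m ≠ ⊤) → (∀ m ∈ S, volume (G m) ≤ 2 ^ (m:ℝ)) → (∀ m ∈ S, 2 ^ (m:ℝ) ≤ 2 * volume (G m)) →
    (∀ m ∈ S, ∀ x ∈ G m, lam m ≤ Rd n f x) →
    ∑ m ∈ S, (lam m * 2 ^ ((m:ℝ) / (n+2))) ^ (((n:ℝ)+2)/(n+1)) ≤ K * ∫⁻ x, f x ^ (((n:ℝ)+2)/(n+1)))
    (A : Set ((Fin n → ℝ) × ℝ)) (hA : MeasurableSet A) (l : ℝ≥0∞) (hl : l ≠ ⊤) (m : ℤ)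
    (h1 : volume A ≤ 2 ^ (m:ℝ)) (h2 : 2 ^ (m:ℝ) ≤ 2 * volume A) (h3 : ∀ x ∈ A, l ≤ Rd n f x) :
    l * 2 ^ ((m:ℝ) / (n+2)) ≤ (K * ∫⁻ x, f x ^ (((n:ℝ)+2)/(n+1))) ^ (1 / (((n:ℝ)+2)/(n+1))) := by
  have := hK {m} (fun _ => A) (fun _ => l) (fun _ => hA) (fun _ => hl) (by simpa using h1)
    (by simpa using h2) (by simpa using h3)
  rw [Finset.sum_singleton] at this
  rwa [one_div, ENNReal.le_rpow_inv_iff (by positivity)]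

lemma weak {n : ℕ} {K : ℝ≥0∞} {f : (Fin n → ℝ) × ℝ → ℝ≥0∞} (hf : Measurable f)
    (hK : ∀ (S : Finset ℤ) (G : ℤ → Set ((Fin n → ℝ) × ℝ)) (lam : ℤ → ℝ≥0∞), (∀ m, MeasurableSet (G m)) →
    (∀ m, lam m ≠ ⊤) → (∀ m ∈ S, volume (G m) ≤ 2 ^ (m:ℝ)) → (∀ m ∈ S, 2 ^ (m:ℝ) ≤ 2 * volume (G m)) →
    (∀ m ∈ S, ∀ x ∈ G m, lam m ≤ Rd n f x) →
    ∑ m ∈ S, (lam m * 2 ^ ((m:ℝ) / (n+2))) ^ (((n:ℝ)+2)/(n+1)) ≤ K * ∫⁻ x, f x ^ (((n:ℝ)+2)/(n+1)))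
    (l : ℝ≥0∞) (hl : l ≠ ⊤) (hl0 : l ≠ 0) :
    volume {x | l ≤ Rd n f x} ≤
      ((K * ∫⁻ x, f x ^ (((n:ℝ)+2)/(n+1))) ^ (1 / (((n:ℝ)+2)/(n+1))) / l) ^ ((n:ℝ)+2) := by
  have hm : MeasurableSet {x | l ≤ Rd n f x} := measurableSet_le measurable_const (meas_Rd hf)
  rw [← Measure.iSup_restrict_spanningSets]
  refine iSup_le fun i => ?_
  rw [Measure.restrict_apply hm]
  set A := {x | l ≤ Rd n f x} ∩ spanningSets volume i with hA
  have mA : MeasurableSet A := hm.inter (measurableSet_spanningSets _ i)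
  have hAt : volume A ≠ ⊤ :=
    ((measure_mono Set.inter_subset_right).trans_lt (measure_spanningSets_lt_top volume i)).ne
  rcases eq_or_ne (volume A) 0 with h0 | h0
  · rw [h0]; exact zero_le
  obtain ⟨m, h1, h2⟩ := dyadic h0 hAt
  have := single hK A mA l hl m h1 h2 (fun x hx => hx.1)
  refine h1.trans ?_
  rw [mul_comm, ← ENNReal.le_div_iff_mul_le (Or.inl hl0) (Or.inl hl)] at this
  calc (2:ℝ≥0∞) ^ (m:ℝ) = (2 ^ ((m:ℝ) / (n+2))) ^ ((n:ℝ)+2) := by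
        rw [← ENNReal.rpow_mul]; congr 1; field_simp
    _ ≤ _ := by gcongr

lemma tsum_pow_le (y : ℤ → ℝ≥0∞) {s : ℝ} (hs : 1 ≤ s) : ∑' m, y m ^ s ≤ (∑' m, y m) ^ s := by
  have e : ∀ x : ℝ≥0∞, x ^ s = x * x ^ (s - 1) := by
    intro x
    conv_rhs => rw [← ENNReal.rpow_one x, ← ENNReal.rpow_mul]
    rw [← ENNReal.rpow_add_of_nonneg _ _ (by norm_num) (by linarith)]
    congr 1; ring
  rw [e (∑' m, y m), ← ENNReal.tsum_mul_right]
  refine ENNReal.tsum_le_tsum fun m => ?_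
  rw [e]
  have : y m ≤ ∑' m, y m := ENNReal.le_tsum m
  gcongr

lemma lorentz (n : ℕ) (hL : LL n) (r : ℝ) (hr : ((n:ℝ)+2)/(n+1) ≤ r) : ∃ C : ℝ≥0∞, C ≠ ⊤ ∧
    ∀ f : (Fin n → ℝ) × ℝ → ℝ≥0∞, Measurable f → ∫⁻ x, f x ^ (((n:ℝ)+2)/(n+1)) ≠ ⊤ →
    ∫⁻ lam in Set.Ioi (0:ℝ), (ENNReal.ofReal lam *
      volume {x | ENNReal.ofReal lam < Rd n f x} ^ ((1:ℝ)/(n+2))) ^ r / ENNReal.ofReal lam ≤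
      C * (∫⁻ x, f x ^ (((n:ℝ)+2)/(n+1))) ^ (r / (((n:ℝ)+2)/(n+1))) := by
  obtain ⟨K, hKt, hK⟩ := hL
  set p : ℝ := ((n:ℝ)+2)/(n+1) with hp
  have hp1 : 1 < p := by rw [hp, lt_div_iff₀ (by positivity)]; linarith
  have hp0 : 0 < p := by linarith
  have hr0 : 0 < r := by linarith
  refine ⟨(2 ^ p * K) ^ (r/p), ENNReal.rpow_ne_top_of_nonneg (by positivity) (by finiteness), fun f hf hI => ?_⟩
  replace hK := hK f hf
  set I := ∫⁻ x, f x ^ p with hIdef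
  set D : ℝ → ℝ≥0∞ := fun lam => volume {x | ENNReal.ofReal lam < Rd n f x} with hD
  have mset : ∀ lam : ℝ, MeasurableSet {x | ENNReal.ofReal lam < Rd n f x} := fun lam =>
    measurableSet_lt measurable_const (meas_Rd hf)
  have hDa : Antitone D := by
    intro s t hst
    refine measure_mono fun x hx => ?_
    exact lt_of_le_of_lt (ENNReal.ofReal_le_ofReal hst) hx
  have mD : Measurable D := hDa.measurable
  have hDt : ∀ lam : ℝ, 0 < lam → D lam ≠ ⊤ := by
    intro lam hlam
    have h := weak hf hK (ENNReal.ofReal lam) (by simp) (by simpa using hlam)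
    have hsub : {x | ENNReal.ofReal lam < Rd n f x} ⊆ {x | ENNReal.ofReal lam ≤ Rd n f x} :=
      fun x hx => le_of_lt (show ENNReal.ofReal lam < Rd n f x from hx)
    refine ((measure_mono hsub).trans_lt (h.trans_lt ?_)).ne
    · refine (ENNReal.rpow_ne_top_of_nonneg (by positivity) ?_).lt_top
      refine ENNReal.div_ne_top ?_ (by simpa using hlam)
      exact ENNReal.rpow_ne_top_of_nonneg (by positivity) (ENNReal.mul_ne_top hKt hI)
  set J : ℤ → Set ℝ := fun m => {lam | 0 < lam ∧ D lam ≤ 2 ^ (m:ℝ) ∧ 2 ^ (m:ℝ) ≤ 2 * D lam} with hJ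
  have mJ : ∀ m, MeasurableSet (J m) := fun m =>
    (measurableSet_lt measurable_const measurable_id).inter
      ((measurableSet_le mD measurable_const).inter
        (measurableSet_le measurable_const (mD.const_mul 2)))
  set L : ℤ → ℝ≥0∞ := fun m => ⨆ lam ∈ J m, ENNReal.ofReal lam with hLdef
  have hLt : ∀ m, L m ≠ ⊤ := by
    intro m
    have : L m ≤ (K * I) ^ (1 / p) / 2 ^ ((m:ℝ)/(n+2)) := by
      refine iSup₂_le fun lam hlam => ?_
      rw [ENNReal.le_div_iff_mul_le (Or.inl (by simp)) (Or.inl (by finiteness))]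
      exact single hK _ (mset lam) _ (by simp) m hlam.2.1 hlam.2.2 (fun x hx => le_of_lt hx)
    refine (this.trans_lt (ENNReal.div_lt_top ?_ (by simp))).ne
    exact ENNReal.rpow_ne_top_of_nonneg (by positivity) (ENNReal.mul_ne_top hKt hI)
  -- finite sums
  have hfin : ∑' m, (L m * 2 ^ ((m:ℝ)/(n+2))) ^ p ≤ 2 ^ p * K * I := by
    have hch : ∀ m, ∃ lam : ℝ, (J m).Nonempty → lam ∈ J m ∧ L m ≤ 2 * ENNReal.ofReal lam := by
      intro m
      by_cases hne : (J m).Nonempty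
      · obtain ⟨l0, hl0⟩ := hne
        have hpos : L m ≠ 0 := by
          have h1 : ENNReal.ofReal l0 ≤ L m := le_iSup₂ (f := fun lam (_ : lam ∈ J m) => ENNReal.ofReal lam) l0 hl0
          have h2 : 0 < ENNReal.ofReal l0 := by simpa using hl0.1
          exact (h2.trans_le h1).ne'
        have hlt : L m / 2 < L m := ENNReal.half_lt_self hpos (hLt m)
        obtain ⟨lam, hlam, h⟩ : ∃ lam, ∃ _ : lam ∈ J m, L m / 2 < ENNReal.ofReal lam := by
          simpa only [hLdef, lt_iSup_iff] using hlt
        refine ⟨lam, fun _ => ⟨hlam, ?_⟩⟩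
        rw [mul_comm, ← ENNReal.div_le_iff (by simp) (by simp)]
        exact h.le
      · exact ⟨0, fun h => absurd h hne⟩
    choose lam hlam using hch
    rw [ENNReal.tsum_eq_iSup_sum]
    refine iSup_le fun S => ?_
    classical
    set S' := S.filter (fun m => (J m).Nonempty) with hS'
    have hSmem : ∀ m ∈ S', lam m ∈ J m ∧ L m ≤ 2 * ENNReal.ofReal (lam m) := fun m hm =>
      hlam m (Finset.mem_filter.1 hm).2
    have h1 : ∑ m ∈ S, (L m * 2 ^ ((m:ℝ)/(n+2))) ^ p = ∑ m ∈ S', (L m * 2 ^ ((m:ℝ)/(n+2))) ^ p := by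
      refine (Finset.sum_subset (Finset.filter_subset _ _) fun m hm hm' => ?_).symm
      have hne : J m = ∅ := by
        by_contra h
        exact hm' (Finset.mem_filter.2 ⟨hm, Set.nonempty_iff_ne_empty.2 h⟩)
      have : L m = 0 := by rw [hLdef]; simp [hne]
      rw [this, zero_mul, ENNReal.zero_rpow_of_pos hp0]
    rw [h1]
    have h2 := hK S' (fun m => {x | ENNReal.ofReal (lam m) < Rd n f x}) (fun m => ENNReal.ofReal (lam m))
      (fun m => mset _) (fun m => by simp) (fun m hm => (hSmem m hm).1.2.1)
      (fun m hm => (hSmem m hm).1.2.2) (fun m hm x hx => le_of_lt hx)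
    calc _ ≤ ∑ m ∈ S', 2 ^ p * (ENNReal.ofReal (lam m) * 2 ^ ((m:ℝ)/(n+2))) ^ p := by
          refine Finset.sum_le_sum fun m hm => ?_
          rw [← ENNReal.mul_rpow_of_nonneg _ _ hp0.le, ← mul_assoc]
          have := (hSmem m hm).2
          gcongr
      _ ≤ _ := by
          rw [← Finset.mul_sum, mul_assoc]
          gcongr
  -- pointwise bound
  have hpt : ∀ lam ∈ Set.Ioi (0:ℝ), (ENNReal.ofReal lam * D lam ^ ((1:ℝ)/(n+2))) ^ r / ENNReal.ofReal lam ≤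
      ∑' m, (J m).indicator (fun _ => L m ^ (r-1) * (2 ^ ((m:ℝ)/(n+2))) ^ r) lam := by
    intro lam hlam
    have hlam' : (0:ℝ) < lam := hlam
    rcases eq_or_ne (D lam) 0 with h0 | h0
    · rw [h0, ENNReal.zero_rpow_of_pos (by positivity), mul_zero, ENNReal.zero_rpow_of_pos hr0]
      simp
    obtain ⟨m, h1, h2⟩ := dyadic h0 (hDt lam hlam')
    have hmem : lam ∈ J m := ⟨hlam', h1, h2⟩
    refine le_trans ?_ (ENNReal.le_tsum m)
    rw [Set.indicator_of_mem hmem]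
    have hl0 : ENNReal.ofReal lam ≠ 0 := by simpa using hlam'
    have hle : ENNReal.ofReal lam ≤ L m := le_iSup₂ (f := fun lam (_ : lam ∈ J m) => ENNReal.ofReal lam) lam hmem
    have e : (ENNReal.ofReal lam * D lam ^ ((1:ℝ)/(n+2))) ^ r / ENNReal.ofReal lam =
        ENNReal.ofReal lam ^ (r-1) * (D lam ^ ((1:ℝ)/(n+2))) ^ r := by
      generalize D lam ^ ((1:ℝ)/(n+2)) = V
      rw [ENNReal.mul_rpow_of_nonneg _ _ hr0.le, ENNReal.rpow_sub _ _ hl0 (by simp), ENNReal.rpow_one]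
      simp only [div_eq_mul_inv]
      ring
    rw [e]
    have h3 : D lam ^ ((1:ℝ)/(n+2)) ≤ 2 ^ ((m:ℝ)/(n+2)) := by
      calc _ ≤ (2 ^ (m:ℝ) : ℝ≥0∞) ^ ((1:ℝ)/(n+2)) := by gcongr
        _ = _ := by rw [← ENNReal.rpow_mul]; congr 1; ring
    gcongr
    linarith
  calc _ ≤ ∫⁻ lam in Set.Ioi (0:ℝ), ∑' m, (J m).indicator (fun _ => L m ^ (r-1) * (2 ^ ((m:ℝ)/(n+2))) ^ r) lam :=
        setLIntegral_mono' measurableSet_Ioi hpt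
    _ = ∑' m, ∫⁻ lam in Set.Ioi (0:ℝ), (J m).indicator (fun _ => L m ^ (r-1) * (2 ^ ((m:ℝ)/(n+2))) ^ r) lam := by
        rw [lintegral_tsum]
        exact fun m => (measurable_const.indicator (mJ m)).aemeasurable
    _ ≤ ∑' m, (L m * 2 ^ ((m:ℝ)/(n+2))) ^ r := by
        refine ENNReal.tsum_le_tsum fun m => ?_
        refine (setLIntegral_le_lintegral _ _).trans ?_
        rw [lintegral_indicator_const (mJ m)]
        have hv : volume (J m) ≤ L m := by
          calc volume (J m) ≤ volume (Set.Icc 0 (L m).toReal) := by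
                refine measure_mono fun lam hlam => ⟨hlam.1.le, ?_⟩
                rw [← ENNReal.ofReal_le_iff_le_toReal (hLt m)]
                exact le_iSup₂ (f := fun lam (_ : lam ∈ J m) => ENNReal.ofReal lam) lam hlam
            _ = L m := by simp [ENNReal.ofReal_toReal (hLt m)]
        have e : L m ^ r = L m ^ (r-1) * L m := by
          conv_rhs => rw [← ENNReal.rpow_one (L m), ← ENNReal.rpow_mul]
          rw [← ENNReal.rpow_add_of_nonneg _ _ (by linarith) (by norm_num)]
          congr 1; ring
        rw [ENNReal.mul_rpow_of_nonneg _ _ hr0.le, e]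
        calc _ ≤ L m ^ (r-1) * (2 ^ ((m:ℝ)/(n+2))) ^ r * L m := by gcongr
          _ = _ := by ring
    _ = ∑' m, ((L m * 2 ^ ((m:ℝ)/(n+2))) ^ p) ^ (r/p) := by
        refine tsum_congr fun m => ?_
        rw [← ENNReal.rpow_mul]; congr 1; field_simp
    _ ≤ (∑' m, (L m * 2 ^ ((m:ℝ)/(n+2))) ^ p) ^ (r/p) := tsum_pow_le _ (by rwa [le_div_iff₀ hp0, one_mul])
    _ ≤ (2 ^ p * K * I) ^ (r/p) := by gcongr
    _ = _ := ENNReal.mul_rpow_of_nonneg _ _ (by positivity)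

lemma PP_of_LL (n : ℕ) (hL : LL n) : PP n := by
  have hq0 : (0:ℝ) < (n:ℝ)+2 := by positivity
  have hp0 : (0:ℝ) < ((n:ℝ)+2)/(n+1) := by positivity
  obtain ⟨C, hC, h⟩ := lorentz n hL ((n:ℝ)+2) (div_le_self (by positivity) (by linarith [(Nat.cast_nonneg n : (0:ℝ) ≤ n)]))
  obtain ⟨K, hKt, hK⟩ := hL
  refine ⟨ENNReal.ofReal ((n:ℝ)+2) * C + 1, by finiteness, fun f hf => ?_⟩
  replace hK := hK f hf
  rcases eq_or_ne (∫⁻ x, f x ^ (((n:ℝ)+2)/(n+1))) ⊤ with hI | hI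
  · rw [hI, ENNReal.top_pow (by omega), ENNReal.mul_top (by simp)]
    exact le_top
  replace h := h f hf hI
  set I := ∫⁻ x, f x ^ (((n:ℝ)+2)/(n+1)) with hIdef
  have mR := meas_Rd hf
  have hae : ∀ᵐ x, Rd n f x ≠ ⊤ := by
    rw [ae_iff]
    simp only [ne_eq, not_not]
    by_contra h0
    set v := volume {x | Rd n f x = ⊤} with hv
    set M := (K * I) ^ (1 / (((n:ℝ)+2)/(n+1))) with hM
    have hMt : M ≠ ⊤ := ENNReal.rpow_ne_top_of_nonneg (by positivity) (ENNReal.mul_ne_top hKt hI)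
    have hw : ∀ l : ℝ≥0∞, l ≠ ⊤ → l ≠ 0 → v ≤ (M / l) ^ ((n:ℝ)+2) := fun l hl hl0 =>
      (measure_mono (fun x (hx : Rd n f x = ⊤) => by simp [hx])).trans (weak hf hK l hl hl0)
    have hvz : v ^ (1/((n:ℝ)+2)) ≠ 0 := by
      have : 0 < v := pos_iff_ne_zero.2 h0
      exact (ENNReal.rpow_pos_of_nonneg this (by positivity)).ne'
    set l := M / v ^ (1/((n:ℝ)+2)) + 1 with hl
    have hlt : M / v ^ (1/((n:ℝ)+2)) ≠ ⊤ := ENNReal.div_ne_top hMt hvz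
    have hl1 : l ≠ ⊤ := by finiteness
    have hl0 : l ≠ 0 := by simp [hl]
    have h1 := hw l hl1 hl0
    have h2 : v ^ (1/((n:ℝ)+2)) ≤ M / l := by
      rw [one_div, ENNReal.rpow_inv_le_iff hq0]; exact h1
    have hvt : v ^ (1/((n:ℝ)+2)) ≠ ⊤ := (h2.trans_lt (ENNReal.div_lt_top hMt hl0)).ne
    rw [ENNReal.le_div_iff_mul_le (Or.inl hl0) (Or.inl hl1), mul_comm,
      ← ENNReal.le_div_iff_mul_le (Or.inl hvz) (Or.inl hvt)] at h2
    exact absurd h2 (not_le.2 (ENNReal.lt_add_right hlt (by simp)))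
  have e1 : ∫⁻ x, Rd n f x ^ (n+2) = ∫⁻ x, ENNReal.ofReal ((Rd n f x).toReal ^ ((n:ℝ)+2)) := by
    refine lintegral_congr_ae ?_
    filter_upwards [hae] with x hx
    rw [← ENNReal.ofReal_rpow_of_nonneg ENNReal.toReal_nonneg hq0.le, ENNReal.ofReal_toReal hx,
      ← ENNReal.rpow_natCast]
    push_cast; rfl
  rw [e1, lintegral_rpow_eq_lintegral_meas_lt_mul volume (ae_of_all _ fun x => ENNReal.toReal_nonneg)
    mR.ennreal_toReal.aemeasurable hq0]
  have e2 : ((n:ℝ)+2) / (((n:ℝ)+2)/(n+1)) = ((n+1:ℕ):ℝ) := by push_cast; field_simp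
  rw [e2, ENNReal.rpow_natCast] at h
  calc _ ≤ ENNReal.ofReal ((n:ℝ)+2) * (C * I ^ (n+1)) := by
        gcongr
        refine le_trans (setLIntegral_mono' measurableSet_Ioi fun t ht => ?_) h
        have ht' : (0:ℝ) < t := ht
        have ht0 : ENNReal.ofReal t ≠ 0 := by simpa using ht'
        have hs : volume {x | t < (Rd n f x).toReal} ≤ volume {x | ENNReal.ofReal t < Rd n f x} := by
          refine measure_mono fun x (hx : t < (Rd n f x).toReal) => ?_
          by_contra hcon
          have hle : Rd n f x ≤ ENNReal.ofReal t := not_lt.1 hcon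
          have := ENNReal.toReal_mono (by simp) hle
          rw [ENNReal.toReal_ofReal ht'.le] at this
          linarith
        have e : ∀ V : ℝ≥0∞, (ENNReal.ofReal t * V ^ ((1:ℝ)/(n+2))) ^ ((n:ℝ)+2) / ENNReal.ofReal t =
            V * ENNReal.ofReal (t ^ ((n:ℝ)+2-1)) := by
          intro V
          rw [ENNReal.mul_rpow_of_nonneg _ _ hq0.le, ← ENNReal.rpow_mul, one_div_mul_cancel hq0.ne',
            ENNReal.rpow_one, ← ENNReal.ofReal_rpow_of_pos ht', ENNReal.rpow_sub _ _ ht0 (by simp),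
            ENNReal.rpow_one, div_eq_mul_inv, div_eq_mul_inv]
          ring
        rw [e]
        gcongr
    _ = ENNReal.ofReal ((n:ℝ)+2) * C * I ^ (n+1) := by ring
    _ ≤ _ := by gcongr; exact le_self_add

lemma PP_all (n : ℕ) : PP n := by
  induction n with
  | zero => exact PP_zero
  | succ k ih => exact PP_of_LL _ (LL_succ k ih)

/-- The sheared function. -/
def shear (n : ℕ) (f : Pt n → ℝ≥0∞) (y : (Fin n → ℝ) × ℝ) : ℝ≥0∞ :=
  f (WithLp.toLp 2 y.1, y.2 - y.1 ⬝ᵥ y.1)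

lemma norm_sq_dot {n : ℕ} (x : Vec n) : ‖x‖ ^ 2 = x.ofLp ⬝ᵥ x.ofLp := by
  rw [EuclideanSpace.norm_sq_eq]
  simp [dotProduct, sq]

lemma meas_shear {n : ℕ} {f : Pt n → ℝ≥0∞} (hf : Measurable f) : Measurable (shear n f) := by
  refine hf.comp (Measurable.prodMk ?_ (measurable_snd.sub (meas_dot' measurable_fst measurable_fst)))
  exact (PiLp.volume_preserving_toLp (Fin n)).measurable.comp measurable_fst

lemma radonT_eq {n : ℕ} {f : Pt n → ℝ≥0∞} (hf : Measurable f) (x : Pt n) :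
    radonT n f x = Rd n (shear n f) ((2:ℝ) • x.1.ofLp, x.2 - x.1.ofLp ⬝ᵥ x.1.ofLp) := by
  unfold radonT Rd
  rw [← lintegral_sub_left_eq_self _ x.1]
  have hm : Measurable (fun y : Vec n => f (y, x.2 - ‖x.1 - y‖ ^ 2)) := by fun_prop
  rw [← (PiLp.volume_preserving_toLp (Fin n)).lintegral_comp (by simpa using hm)]
  refine lintegral_congr fun y => ?_
  simp only [shear, sub_sub_cancel, norm_sq_dot]
  congr 2
  · simp
  · rw [WithLp.ofLp_sub]
    simp only [sub_dotProduct, dotProduct_sub, smul_dotProduct, dotProduct_comm y x.1.ofLp, smul_eq_mul]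
    ring

lemma int_shear {n : ℕ} {f : Pt n → ℝ≥0∞} (hf : Measurable f) (p : ℝ) :
    ∫⁻ y, shear n f y ^ p = ∫⁻ x, f x ^ p := by
  rw [Measure.volume_eq_prod, lintegral_prod _ ((meas_shear hf).pow_const p).aemeasurable,
    Measure.volume_eq_prod, lintegral_prod _ (hf.pow_const p).aemeasurable,
    ← (PiLp.volume_preserving_toLp (Fin n)).lintegral_comp (Measurable.lintegral_prod_right' (hf.pow_const p))]
  refine lintegral_congr fun y => ?_
  unfold shear
  exact lintegral_sub_right_eq_self (fun z => f (WithLp.toLp 2 y, z) ^ p) (y ⬝ᵥ y)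

lemma level_le {n : ℕ} {f : Pt n → ℝ≥0∞} (hf : Measurable f) (l : ℝ≥0∞) :
    volume {x | l < radonT n f x} ≤ volume {x | l < Rd n (shear n f) x} := by
  set B := {x | l < Rd n (shear n f) x} with hB
  have mB : MeasurableSet B := measurableSet_lt measurable_const (meas_Rd (meas_shear hf))
  set b : (Fin n → ℝ) × ℝ → ℝ≥0∞ := B.indicator 1 with hb
  have mb : Measurable b := measurable_one.indicator mB
  set A := {x | l < radonT n f x} with hA
  have hAB : A = (fun x : Pt n => ((2:ℝ) • x.1.ofLp, x.2 - x.1.ofLp ⬝ᵥ x.1.ofLp)) ⁻¹' B := by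
    ext x
    simp [hA, hB, radonT_eq hf]
  have mofLp : Measurable (fun x : Vec n => x.ofLp) := (PiLp.volume_preserving_ofLp (Fin n)).measurable
  have mΦ : Measurable (fun x : Pt n => ((2:ℝ) • x.1.ofLp, x.2 - x.1.ofLp ⬝ᵥ x.1.ofLp)) := by
    have m1 : Measurable (fun x : Pt n => x.1.ofLp) := mofLp.comp measurable_fst
    have m2 : Measurable (fun x : Pt n => (2:ℝ) • x.1.ofLp) := m1.const_smul (2:ℝ)
    exact Measurable.prodMk m2 (measurable_snd.sub (meas_dot' m1 m1))
  have mA : MeasurableSet A := by rw [hAB]; exact mΦ mB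
  have mJ : Measurable (fun y : Fin n → ℝ => ∫⁻ z : ℝ, b (y, z)) := Measurable.lintegral_prod_right' mb
  calc volume A = ∫⁻ x : Pt n, b ((2:ℝ) • x.1.ofLp, x.2 - x.1.ofLp ⬝ᵥ x.1.ofLp) := by
        rw [← lintegral_indicator_one mA]
        refine lintegral_congr fun x => ?_
        rw [hAB]; rfl
    _ = ∫⁻ x : Vec n, ∫⁻ z : ℝ, b ((2:ℝ) • x.ofLp, z) := by
        have mc : Measurable (fun x : Pt n => b ((2:ℝ) • x.1.ofLp, x.2 - x.1.ofLp ⬝ᵥ x.1.ofLp)) := mb.comp mΦ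
        rw [Measure.volume_eq_prod, lintegral_prod _ mc.aemeasurable]
        refine lintegral_congr fun x => ?_
        exact lintegral_sub_right_eq_self (μ := (volume : Measure ℝ)) (fun z => b ((2:ℝ) • x.ofLp, z)) (x.ofLp ⬝ᵥ x.ofLp)
    _ = ∫⁻ y : Fin n → ℝ, ∫⁻ z : ℝ, b ((2:ℝ) • y, z) :=
        (PiLp.volume_preserving_ofLp (Fin n)).lintegral_comp (mJ.comp (measurable_const_smul (2:ℝ)))
    _ ≤ ∫⁻ y : Fin n → ℝ, ∫⁻ z : ℝ, b (y, z) := by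
        rw [scale_lintegral volume (fun y : Fin n → ℝ => ∫⁻ z : ℝ, b (y, z)) (two_ne_zero)]
        refine le_mul_of_one_le_left' ?_
        refine one_le_pow₀ ?_
        simp
    _ = volume B := by
        rw [← lintegral_indicator_one mB, Measure.volume_eq_prod, lintegral_prod _ mb.aemeasurable]

/-- `T` maps `L^{(d+1)/d}` boundedly into the Lorentz space
`L^{d+1, r}` for every `r > (d+1)/d`, the Lorentz quasinorm being
`(∫_0^∞ (λ |{Tf > λ}|^{1/(d+1)})^r dλ/λ)^{1/r}`. -/
theorem stmt7 (d : ℕ) (hd : 2 ≤ d) (r : ℝ) (hr : ((d : ℝ) + 1) / d < r) :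
    ∃ C : ℝ, 0 < C ∧
      ∀ (f : Pt (d - 1) → ℝ≥0∞), Measurable f →
        LpN (d - 1) (((d : ℝ) + 1) / d) f < ⊤ →
        (∫⁻ lam in Set.Ioi (0 : ℝ),
            (ENNReal.ofReal lam *
                volume {x : Pt (d - 1) | ENNReal.ofReal lam < radonT (d - 1) f x} ^
                  ((1 : ℝ) / (d + 1))) ^ r / ENNReal.ofReal lam) ^ (1 / r) ≤
          ENNReal.ofReal C * LpN (d - 1) (((d : ℝ) + 1) / d) f := by
  obtain ⟨k, rfl⟩ : ∃ k, d = k + 2 := ⟨d - 2, by omega⟩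
  have e0 : k + 2 - 1 = k + 1 := by omega
  rw [e0]
  have e1 : (((k+2:ℕ):ℝ) + 1) / ((k+2:ℕ):ℝ) = (((k+1:ℕ):ℝ)+2)/((k+1:ℕ)+1) := by push_cast; ring
  have e2 : ((k+2:ℕ):ℝ) + 1 = ((k+1:ℕ):ℝ)+2 := by push_cast; ring
  rw [e1] at hr ⊢
  rw [e2]
  set n := k + 1 with hn
  obtain ⟨C, hC, h⟩ := lorentz n (LL_succ k (PP_all k)) r hr.le
  set p : ℝ := ((n:ℝ)+2)/(n+1) with hp
  have hp0 : 0 < p := by positivity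
  have hr0 : 0 < r := hp0.trans hr
  have hCt : C ^ (1/r) ≠ ⊤ := ENNReal.rpow_ne_top_of_nonneg (by positivity) hC
  refine ⟨(C ^ (1/r)).toReal + 1, by positivity, fun f hf hfin => ?_⟩
  have hI : ∫⁻ x, f x ^ p ≠ ⊤ := by
    intro hcon
    rw [LpN, hcon, ENNReal.top_rpow_of_pos (by positivity)] at hfin
    exact lt_irrefl _ hfin
  have h1 := h (shear n f) (meas_shear hf) (by rw [int_shear hf]; exact hI)
  rw [int_shear hf] at h1
  calc _ ≤ (C * (∫⁻ x, f x ^ p) ^ (r/p)) ^ (1/r) := by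
        gcongr
        refine le_trans ?_ h1
        gcongr
        exact level_le hf _
    _ = C ^ (1/r) * LpN n p f := by
        rw [ENNReal.mul_rpow_of_nonneg _ _ (by positivity), ← ENNReal.rpow_mul, LpN]
        congr 2; field_simp
    _ ≤ _ := by
        gcongr
        rw [ENNReal.ofReal_add (by positivity) (by norm_num), ENNReal.ofReal_toReal hCt]
        exact le_self_add
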